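/- For all integers m ≥ 3 and g ≥ 5, n_p({2,m};g) = (m(g−2)+4)/2 if g is even, and n_p({2,m};g) = (m(g−1)+2)/2 if g is odd. Moreover, the only planar ({2,m};g)-cages (up to isomorphism) are the graph O_{m,g}, and additionally, when m is even and g is odd, the graph F_{m,g}. -/

import Mathlib

open SimpleGraph

/-- `H` is a minor of `G`: there is an assignment of pairwise disjoint connected
branch sets in `G` to the vertices of `H`, with an edge of `G` between the branch
sets of any two adjacent vertices of `H`. -/
def SimpleGraph.IsMinorOf {W V : Type*} (H : SimpleGraph W) (G : SimpleGraph V) : Prop :=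
  ∃ f : W → Set V,
    (∀ w, (G.induce (f w)).Connected) ∧
    (Pairwise fun w₁ w₂ => Disjoint (f w₁) (f w₂)) ∧
    ∀ ⦃w₁ w₂⦄, H.Adj w₁ w₂ → ∃ v₁ ∈ f w₁, ∃ v₂ ∈ f w₂, G.Adj v₁ v₂

/-- A graph is planar iff it has no `K₅` minor and no `K₃,₃` minor (Wagner's theorem). -/
def SimpleGraph.IsPlanar {V : Type*} (G : SimpleGraph V) : Prop :=
  ¬ (completeGraph (Fin 5)).IsMinorOf G ∧
    ¬ (completeBipartiteGraph (Fin 3) (Fin 3)).IsMinorOf G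

/-- A graph is outerplanar iff it has no `K₄` minor and no `K₂,₃` minor. -/
def SimpleGraph.IsOuterplanar {V : Type*} (G : SimpleGraph V) : Prop :=
  ¬ (completeGraph (Fin 4)).IsMinorOf G ∧
    ¬ (completeBipartiteGraph (Fin 2) (Fin 3)).IsMinorOf G

/-- The degree of a vertex, as the cardinality of its neighbour set. -/
noncomputable def SimpleGraph.degN {V : Type*} (G : SimpleGraph V) (v : V) : ℕ :=
  (G.neighborSet v).ncard

/-- An `({r,m};g)`-graph: girth `g`, every vertex has degree `r` or `m`, both occur. -/
def IsBigirthGraph {V : Type*} (G : SimpleGraph V) (r m g : ℕ) : Prop :=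
  G.girth = g ∧ (∀ v, G.degN v = r ∨ G.degN v = m) ∧
    (∃ v, G.degN v = r) ∧ (∃ v, G.degN v = m)

/-- The set of orders of finite planar `({r,m};g)`-graphs. -/
def bicageOrders (r m g : ℕ) : Set ℕ :=
  {n | ∃ (V : Type) (_ : Fintype V) (G : SimpleGraph V),
    G.IsPlanar ∧ IsBigirthGraph G r m g ∧ Fintype.card V = n}

/-- The graph `O_{m,g}`: two vertices `u = inl 0` and `v = inl 1` joined by `m`
internally disjoint paths, of which `m−1` have length `⌈g/2⌉` (internal vertices
`inr (inl (i,j))`) and one has length `⌊g/2⌋` (internal vertices `inr (inr j)`). -/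
def Ograph (m g : ℕ) :
    SimpleGraph (Fin 2 ⊕ (Fin (m - 1) × Fin ((g + 1) / 2 - 1) ⊕ Fin (g / 2 - 1))) :=
  SimpleGraph.fromRel (fun x y =>
    match x, y with
    | Sum.inl u, Sum.inr (Sum.inl (_, j)) =>
        (u.val = 0 ∧ j.val = 0) ∨ (u.val = 1 ∧ j.val = (g + 1) / 2 - 2)
    | Sum.inl u, Sum.inr (Sum.inr j) =>
        (u.val = 0 ∧ j.val = 0) ∨ (u.val = 1 ∧ j.val = g / 2 - 2)
    | Sum.inr (Sum.inl (i, j)), Sum.inr (Sum.inl (i', j')) => i = i' ∧ j'.val = j.val + 1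
    | Sum.inr (Sum.inr j), Sum.inr (Sum.inr j') => j'.val = j.val + 1
    | _, _ => False)

/-- The graph `F_{m,g}` (for even `m`): `m/2` cycles of length `g` all sharing the
single common vertex `inl ()`. -/
def Fgraph (m g : ℕ) : SimpleGraph (Unit ⊕ Fin (m / 2) × Fin (g - 1)) :=
  SimpleGraph.fromRel (fun x y =>
    match x, y with
    | Sum.inl _, Sum.inr (_, j) => j.val = 0 ∨ j.val = g - 2
    | Sum.inr (c, j), Sum.inr (c', j') => c = c' ∧ j'.val = j.val + 1
    | _, _ => False)

/-! A vertex of degree `m` in a graph of girth `g` and minimum degree at least two is the body of a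
spider whose `m` legs are nonbacktracking walks. The girth keeps the legs disjoint up to distance
`⌊(g - 1) / 2⌋`, and one of them even up to `⌊g / 2⌋`; counting vertices gives the lower bound. If
it is attained, there are no further vertices, so every leg next runs into the end of another one.
For even `g` that is the end of the long leg, and the graph is `O_{m,g}`. For odd `g`, either some
leg has an end of degree `m`, which then absorbs all other legs and yields `O_{m,g}` again, or all
ends have degree two and are matched in pairs, which yields `F_{m,g}`.

Planarity is needed only for `O_{m,g}`: in a `K₅` or `K₃,₃` minor some branch set avoids both
vertices of degree `m`, but a connected set of vertices of degree two has at most two neighbours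
outside. -/

section Nonbacktracking

variable {V : Type*} {G : SimpleGraph V} {g : ℕ}

lemma egirth_le_of_injOn_of_adj {y : ℕ → V} {d : ℕ} (hd : 2 ≤ d)
    (hadj : ∀ k < d, G.Adj (y k) (y (k + 1))) (hinj : Set.InjOn y (Set.Iic d))
    (hclosed : G.Adj (y d) (y 0)) : G.egirth ≤ (d + 1 : ℕ) := by
  have hstep : ∀ u v : Fin (d + 1), (u - v).val = 1 → G.Adj (y v) (y u) := by
    intro u v huv
    rcases le_or_gt v u with hvu | hvu
    · rw [Fin.sub_val_of_le hvu] at huv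
      rw [show (u : ℕ) = v + 1 by omega]
      exact hadj v (by omega)
    · have := Fin.coe_sub_iff_lt.mpr hvu
      rw [show (u : ℕ) = 0 by omega, show (v : ℕ) = d by omega]
      exact hclosed
  have hcontained : (cycleGraph (d + 1)).IsContained G := by
    refine ⟨⟨⟨fun i => y i, ?_⟩, ?_⟩⟩
    · intro u v huv
      exact (cycleGraph_adj'.mp huv).elim (fun h => (hstep u v h).symm) (hstep v u)
    · exact fun u v huv => Fin.ext (hinj (Nat.lt_succ_iff.mp u.2) (Nat.lt_succ_iff.mp v.2) huv)
  obtain ⟨v, w, hw, hlen⟩ := (cycleGraph_isContained_iff (by omega)).mp hcontained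
  exact hlen ▸ egirth_le_length hw

lemma not_adj_of_adj_of_adj (hg : 4 ≤ G.egirth) {a b c : V} (hab : G.Adj a b)
    (hbc : G.Adj b c) : ¬ G.Adj a c := by
  intro hac
  have hcycle : (Walk.cons hab (Walk.cons hbc (Walk.cons hac.symm Walk.nil))).IsCycle := by
    simp [Walk.isCycle_def, Walk.isTrail_def, hab.ne, hab.ne', hbc.ne, hac.ne, hac.ne']
  exact absurd (hg.trans (egirth_le_length hcycle)) (by norm_num)

/-- An infinite walk in `G`, given by its sequence of vertices, that never immediately returns
along the edge it has just used. -/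
structure IsNonbacktracking (G : SimpleGraph V) (y : ℕ → V) : Prop where
  adj : ∀ k, G.Adj (y k) (y (k + 1))
  ne : ∀ k, y (k + 2) ≠ y k

namespace IsNonbacktracking

variable {y : ℕ → V}

lemma le_of_adj (hy : IsNonbacktracking G y) (hg : (g : ℕ∞) ≤ G.egirth) {i d : ℕ} (hd : 2 ≤ d)
    (h : G.Adj (y i) (y (i + d))) : g ≤ d + 1 := by
  induction d using Nat.strong_induction_on generalizing i with
  | _ d ih =>
  by_cases hinj : Set.InjOn (fun k => y (i + k)) (Set.Iic d)
  · exact_mod_cast hg.trans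
      (egirth_le_of_injOn_of_adj hd (fun k _ => hy.adj (i + k)) hinj h.symm)
  · have hrepeat : ∃ a b, a < b ∧ b ≤ d ∧ y (i + a) = y (i + b) := by
      simp only [Set.InjOn, Set.mem_Iic] at hinj
      push Not at hinj
      obtain ⟨a, ha, b, hb, hab, hne⟩ := hinj
      rcases hne.lt_or_gt with hlt | hlt
      · exact ⟨a, b, hlt, hb, hab⟩
      · exact ⟨b, a, hlt, ha, hab.symm⟩
    obtain ⟨a, b, hab, hbd, heq⟩ := hrepeat
    have h1 : b ≠ a + 1 := by
      rintro rfl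
      exact (hy.adj (i + a)).ne heq
    have h2 : b ≠ a + 2 := by
      rintro rfl
      exact hy.ne (i + a) heq.symm
    have hshort : G.Adj (y (i + a)) (y (i + a + (b - 1 - a))) := by
      have := hy.adj (i + (b - 1))
      rw [show i + (b - 1) + 1 = i + b by omega, ← heq] at this
      rw [show i + a + (b - 1 - a) = i + (b - 1) by omega]
      exact this.symm
    have := ih (b - 1 - a) (by omega) (by omega) hshort
    omega

lemma le_of_eq (hy : IsNonbacktracking G y) (hg : (g : ℕ∞) ≤ G.egirth) {i d : ℕ} (hd : d ≠ 0)
    (h : y i = y (i + d)) : g ≤ d := by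
  have h1 : d ≠ 1 := by
    rintro rfl
    exact (hy.adj i).ne h
  have h2 : d ≠ 2 := by
    rintro rfl
    exact hy.ne i h.symm
  have hadj : G.Adj (y i) (y (i + (d - 1))) := by
    rw [h, show i + d = i + (d - 1) + 1 by omega]
    exact (hy.adj _).symm
  have := hy.le_of_adj hg (by omega) hadj
  omega

lemma injOn (hy : IsNonbacktracking G y) (hg : (g : ℕ∞) ≤ G.egirth) : Set.InjOn y (Set.Iio g) := by
  intro k hk l hl h
  wlog hkl : k ≤ l generalizing k l
  · exact (this hl hk h.symm (by omega)).symm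
  simp only [Set.mem_Iio] at hk hl
  by_contra hne
  have := hy.le_of_eq hg (i := k) (d := l - k) (by omega) (by rwa [Nat.add_sub_of_le hkl])
  omega

lemma eq_add_one_of_adj (hy : IsNonbacktracking G y) (hg : (g : ℕ∞) ≤ G.egirth) {k l : ℕ}
    (hk : k + 1 < g) (hl : l + 1 < g) (h : G.Adj (y k) (y l)) : l = k + 1 ∨ k = l + 1 := by
  wlog hkl : k ≤ l generalizing k l
  · exact (this hl hk h.symm (by omega)).symm
  by_contra hne
  have hlk : l ≠ k := by
    rintro rfl
    exact G.irrefl h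
  have := hy.le_of_adj hg (i := k) (d := l - k) (by omega) (by rwa [Nat.add_sub_of_le hkl])
  omega

end IsNonbacktracking

lemma exists_isNonbacktracking (hG : ∀ v, (G.neighborSet v).Nontrivial) {u w : V}
    (huw : G.Adj u w) : ∃ y, IsNonbacktracking G y ∧ y 0 = u ∧ y 1 = w := by
  choose next hadj hne using fun e : V × V => (hG e.2).exists_ne e.1
  let edge : ℕ → V × V := Nat.rec (u, w) fun _ e => (e.2, next e)
  have hedge : ∀ k, G.Adj (edge k).1 (edge k).2 := fun k =>
    k.casesOn huw fun n => hadj (edge n)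
  exact ⟨fun k => (edge k).1, ⟨hedge, fun k => hne (edge k)⟩, rfl, rfl⟩

end Nonbacktracking

section Spider

variable {V ι : Type*} {G : SimpleGraph V} {g : ℕ} {u : V} {W : ι → ℕ → V}

/-- A spider with body `u`: infinite nonbacktracking walks (its legs) that start at `u` along
pairwise distinct edges. The girth controls how far out the legs are disjoint paths. -/
structure IsSpider (G : SimpleGraph V) (u : V) (W : ι → ℕ → V) : Prop where
  zero : ∀ i, W i 0 = u
  first_injective : Function.Injective fun i => W i 1
  nonbacktracking : ∀ i, IsNonbacktracking G (W i)

lemma exists_isSpider (hG : ∀ v, (G.neighborSet v).Nontrivial) {f : ι → V}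
    (hf : Function.Injective f) (hadj : ∀ i, G.Adj u (f i)) : ∃ W : ι → ℕ → V, IsSpider G u W := by
  choose W hW hzero hone using fun i => exists_isNonbacktracking hG (hadj i)
  exact ⟨W, hzero, by simpa only [hone] using hf, hW⟩

lemma exists_isSpider_fin (hG : ∀ v, (G.neighborSet v).Nontrivial) (u : V)
    [Finite (G.neighborSet u)] : ∃ W : Fin (G.degN u) → ℕ → V, IsSpider G u W := by
  let e : Fin (G.degN u) ≃ G.neighborSet u := (Finite.equivFinOfCardEq rfl).symm
  exact exists_isSpider hG (Subtype.val_injective.comp e.injective) fun i => (e i).2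

namespace IsSpider

lemma injOn (hs : IsSpider G u W) (hg : (g : ℕ∞) ≤ G.egirth) (i : ι) :
    Set.InjOn (W i) (Set.Iio g) :=
  (hs.nonbacktracking i).injOn hg

lemma isNonbacktracking_join (hs : IsSpider G u W) {i j : ι} (hij : i ≠ j) (k : ℕ) :
    IsNonbacktracking G fun n => if n ≤ k then W i (k - n) else W j (n - k) := by
  have hfirst : W j 1 ≠ W i 1 := fun h => hij (hs.first_injective h).symm
  refine ⟨fun n => ?_, fun n => ?_⟩
  · rcases lt_trichotomy n k with h | rfl | h
    · have := ((hs.nonbacktracking i).adj (k - (n + 1))).symm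
      rwa [if_pos h.le, if_pos (by omega), show k - n = k - (n + 1) + 1 by omega]
    · have := (hs.nonbacktracking j).adj 0
      rwa [if_pos le_rfl, if_neg (by omega), Nat.sub_self, hs.zero, ← hs.zero j,
        Nat.add_sub_cancel_left]
    · have := (hs.nonbacktracking j).adj (n - k)
      rwa [if_neg (by omega), if_neg (by omega), show n + 1 - k = n - k + 1 by omega]
  · rcases lt_trichotomy (n + 1) k with h | rfl | h
    · have := ((hs.nonbacktracking i).ne (k - (n + 2))).symm
      rwa [if_pos (by omega), if_pos (by omega), show k - n = k - (n + 2) + 2 by omega]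
    · rwa [if_neg (by omega), if_pos (by omega), show n + 2 - (n + 1) = 1 by omega,
        Nat.add_sub_cancel_left]
    · rw [if_neg (by omega)]
      split_ifs with hn
      · obtain rfl : n = k := by omega
        rw [Nat.sub_self, hs.zero, ← hs.zero j, Nat.add_sub_cancel_left]
        exact (hs.nonbacktracking j).ne 0
      · rw [show n + 2 - k = n - k + 2 by omega]
        exact (hs.nonbacktracking j).ne (n - k)

lemma le_add_of_eq (hs : IsSpider G u W) (hg : (g : ℕ∞) ≤ G.egirth) {i j : ι} (hij : i ≠ j)
    {k l : ℕ} (hkl : k + l ≠ 0) (h : W i k = W j l) : g ≤ k + l := by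
  refine (hs.isNonbacktracking_join hij k).le_of_eq hg (i := 0) hkl ?_
  simp only [Nat.zero_le, if_true, Nat.sub_zero, Nat.zero_add, Nat.add_sub_cancel_left]
  split_ifs with hl
  · obtain rfl : l = 0 := by omega
    rw [h, Nat.add_zero, Nat.sub_self, hs.zero, hs.zero]
  · exact h

lemma le_add_of_adj (hs : IsSpider G u W) (hg : (g : ℕ∞) ≤ G.egirth) {i j : ι} (hij : i ≠ j)
    {k l : ℕ} (hkl : k + l ≠ 1) (h : G.Adj (W i k) (W j l)) : g ≤ k + l + 1 := by
  have h0 : k + l ≠ 0 := by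
    intro h0
    rw [show k = 0 by omega, show l = 0 by omega, hs.zero, hs.zero] at h
    exact G.irrefl h
  refine (hs.isNonbacktracking_join hij k).le_of_adj hg (i := 0) (by omega) ?_
  simp only [Nat.zero_le, if_true, Nat.sub_zero, Nat.zero_add, Nat.add_sub_cancel_left]
  split_ifs with hl
  · obtain rfl : l = 0 := by omega
    rwa [Nat.add_zero, Nat.sub_self, hs.zero, ← hs.zero j]
  · exact h

section MooreBound

variable {r : ι → ℕ}

/-- The vertices of the truncation of a spider to legs of lengths `r`; `none` is the body. -/
def ball (W : ι → ℕ → V) (u : V) (r : ι → ℕ) : Option (Σ i, Fin (r i)) → V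
  | none => u
  | some x => W x.1 (x.2 + 1)

lemma ball_injective (hs : IsSpider G u W) (hg : (g : ℕ∞) ≤ G.egirth) (hr : ∀ i, r i < g)
    (hrr : Pairwise fun i j => r i + r j < g) : Function.Injective (ball W u r) := by
  have hbody : ∀ (i : ι) (k : Fin (r i)), u ≠ W i (k + 1) := by
    intro i k h
    have hk := k.2
    have hi := hr i
    rw [← hs.zero i] at h
    exact absurd (hs.injOn hg i (Set.mem_Iio.mpr (by omega)) (Set.mem_Iio.mpr (by omega)) h)
      (by omega)
  rintro (_ | ⟨i, k⟩) (_ | ⟨j, l⟩) h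
  · rfl
  · exact absurd h (hbody j l)
  · exact absurd h.symm (hbody i k)
  · change W i (k + 1) = W j (l + 1) at h
    have hk := k.2
    have hl := l.2
    rcases eq_or_ne i j with rfl | hij
    · have hi := hr i
      have := hs.injOn hg i (Set.mem_Iio.mpr (by omega)) (Set.mem_Iio.mpr (by omega)) h
      rw [show k = l from Fin.ext (by omega)]
    · have := hs.le_add_of_eq hg hij (by omega) h
      have := hrr hij
      omega

variable [Fintype ι]

lemma card_ball (r : ι → ℕ) : Fintype.card (Option (Σ i, Fin (r i))) = 1 + ∑ i, r i := by
  simp [add_comm]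

variable [Fintype V]

lemma one_add_sum_le_card (hs : IsSpider G u W) (hg : (g : ℕ∞) ≤ G.egirth) (hr : ∀ i, r i < g)
    (hrr : Pairwise fun i j => r i + r j < g) : 1 + ∑ i, r i ≤ Fintype.card V :=
  card_ball r ▸ Fintype.card_le_of_injective _ (hs.ball_injective hg hr hrr)

lemma exists_eq_of_card_le [Nonempty ι] (hs : IsSpider G u W) (hg : (g : ℕ∞) ≤ G.egirth)
    (hr : ∀ i, r i < g) (hrr : Pairwise fun i j => r i + r j < g)
    (hcard : Fintype.card V ≤ 1 + ∑ i, r i) (x : V) : ∃ i, ∃ k ≤ r i, W i k = x := by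
  have hbij := (hs.ball_injective hg hr hrr).bijective_of_nat_card_le
    (by simpa only [Nat.card_eq_fintype_card, card_ball] using hcard)
  obtain ⟨_ | ⟨i, k⟩, rfl⟩ := hbij.surjective x
  · exact ⟨Classical.arbitrary ι, 0, Nat.zero_le _, hs.zero _⟩
  · exact ⟨i, k + 1, k.2, rfl⟩

end MooreBound

end IsSpider

end Spider

section PathCover

variable {V V' ι ι' : Type*} {G : SimpleGraph V} {G' : SimpleGraph V'} {len : ι → ℕ}
  {len' : ι' → ℕ} {p : ι → ℕ → V} {p' : ι' → ℕ → V'}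

/-- The walks `p i 0, …, p i (len i)` cover all vertices and all edges of `G`. They may overlap,
and the values `p i k` with `len i < k` are junk. -/
structure IsPathCover (G : SimpleGraph V) (len : ι → ℕ) (p : ι → ℕ → V) : Prop where
  surj : ∀ x, ∃ i, ∃ k ≤ len i, p i k = x
  adj_iff : ∀ x y, G.Adj x y ↔ ∃ i, ∃ k < len i, s(x, y) = s(p i k, p i (k + 1))

namespace IsPathCover

lemma adj (h : IsPathCover G len p) {i : ι} {k : ℕ} (hk : k < len i) :
    G.Adj (p i k) (p i (k + 1)) :=
  (h.adj_iff _ _).mpr ⟨i, k, hk, rfl⟩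

lemma exists_hom (h : IsPathCover G len p) (h' : IsPathCover G' len' p') {e : ι → ι'}
    (hlen : ∀ i, len' (e i) = len i)
    (heq : ∀ i j, ∀ k ≤ len i, ∀ l ≤ len j, p i k = p j l → p' (e i) k = p' (e j) l) :
    ∃ f : G →g G', ∀ i, ∀ k ≤ len i, f (p i k) = p' (e i) k := by
  choose leg pos hpos hpt using h.surj
  have hf : ∀ i, ∀ k ≤ len i, p' (e (leg (p i k))) (pos (p i k)) = p' (e i) k :=
    fun i k hk => heq _ _ _ (hpos _) _ hk (hpt _)
  refine ⟨⟨fun x => p' (e (leg x)) (pos x), fun {x y} hxy => ?_⟩, hf⟩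
  obtain ⟨i, k, hk, hxy⟩ := (h.adj_iff x y).mp hxy
  have hadj := h'.adj ((hlen i).symm ▸ hk)
  rcases Sym2.eq_iff.mp hxy with ⟨rfl, rfl⟩ | ⟨rfl, rfl⟩
  · rwa [hf i k hk.le, hf i (k + 1) hk]
  · rw [hf i k hk.le, hf i (k + 1) hk]
    exact hadj.symm

lemma nonempty_iso (h : IsPathCover G len p) (h' : IsPathCover G' len' p') (e : ι ≃ ι')
    (hlen : ∀ i, len' (e i) = len i)
    (heq : ∀ i j, ∀ k ≤ len i, ∀ l ≤ len j, p i k = p j l ↔ p' (e i) k = p' (e j) l) :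
    Nonempty (G ≃g G') := by
  obtain ⟨f, hf⟩ := h.exists_hom h' hlen fun i j k hk l hl => (heq i j k hk l hl).mp
  have hlen' : ∀ i, len (e.symm i) = len' i := fun i => by rw [← hlen, e.apply_symm_apply]
  obtain ⟨f', hf'⟩ := h'.exists_hom h hlen' fun i j k hk l hl => by
    simpa only [e.apply_symm_apply] using
      (heq (e.symm i) (e.symm j) k (hlen' i ▸ hk) l (hlen' j ▸ hl)).mpr
  have hleft : Function.LeftInverse f' f := by
    intro x
    obtain ⟨i, k, hk, rfl⟩ := h.surj x
    rw [hf i k hk, hf' _ k (hlen i ▸ hk), e.symm_apply_apply]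
  have hright : Function.RightInverse f' f := by
    intro x
    obtain ⟨i, k, hk, rfl⟩ := h'.surj x
    rw [hf' i k hk, hf _ k (hlen' i ▸ hk), e.apply_symm_apply]
  exact ⟨⟨⟨f, f', hleft, hright⟩,
    fun {x y} => ⟨fun hxy => hleft x ▸ hleft y ▸ f'.map_adj hxy, f.map_adj⟩⟩⟩

end IsPathCover

lemma isPathCover_fromRel {r : V → V → Prop}
    (hsurj : ∀ x, ∃ i, ∃ k ≤ len i, p i k = x)
    (hadj : ∀ i, ∀ k < len i, (fromRel r).Adj (p i k) (p i (k + 1)))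
    (hr : ∀ x y, r x y → ∃ i, ∃ k < len i, s(x, y) = s(p i k, p i (k + 1))) :
    IsPathCover (fromRel r) len p where
  surj := hsurj
  adj_iff x y := by
    constructor
    · rintro ⟨-, h | h⟩
      · exact hr x y h
      · simpa only [Sym2.eq_swap] using hr y x h
    · rintro ⟨i, k, hk, hxy⟩
      rw [← mem_edgeSet, hxy]
      exact hadj i k hk

end PathCover

section Theta

variable {V V' ι ι' : Type*} {G : SimpleGraph V} {G' : SimpleGraph V'} {len : ι → ℕ}
  {len' : ι' → ℕ} {p : ι → ℕ → V} {p' : ι' → ℕ → V'}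

/-- `G` consists of two vertices joined by internally disjoint paths `p i` of lengths `len i`. -/
structure IsTheta (G : SimpleGraph V) (len : ι → ℕ) (p : ι → ℕ → V) : Prop
    extends IsPathCover G len p where
  eq_iff : ∀ i j, ∀ k ≤ len i, ∀ l ≤ len j,
    (p i k = p j l ↔ i = j ∧ k = l ∨ k = 0 ∧ l = 0 ∨ k = len i ∧ l = len j)

namespace IsTheta

lemma nonempty_iso (h : IsTheta G len p) (h' : IsTheta G' len' p') (e : ι ≃ ι')
    (hlen : ∀ i, len' (e i) = len i) : Nonempty (G ≃g G') := by
  refine h.toIsPathCover.nonempty_iso h'.toIsPathCover e hlen fun i j k hk l hl => ?_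
  rw [h.eq_iff i j k hk l hl, h'.eq_iff _ _ k (hlen i ▸ hk) l (hlen j ▸ hl), hlen, hlen,
    e.apply_eq_iff_eq]

lemma reverse (h : IsTheta G len p) : IsTheta G len fun i k => p i (len i - k) where
  surj x := by
    obtain ⟨i, k, hk, rfl⟩ := h.surj x
    exact ⟨i, len i - k, Nat.sub_le _ _, by rw [Nat.sub_sub_self hk]⟩
  adj_iff x y := by
    rw [h.adj_iff]
    constructor <;> rintro ⟨i, k, hk, hxy⟩ <;> refine ⟨i, len i - (k + 1), by omega, ?_⟩ <;>
      rw [hxy, Sym2.eq_swap]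
    · rw [Nat.sub_sub_self hk, show len i - (len i - (k + 1) + 1) = k by omega]
    · rw [show len i - (k + 1) + 1 = len i - k by omega]
  eq_iff i j k hk l hl := by
    rw [h.eq_iff i j _ (Nat.sub_le _ _) _ (Nat.sub_le _ _)]
    constructor
    · rintro (⟨rfl, hkl⟩ | hkl | hkl)
      · exact Or.inl ⟨rfl, by omega⟩
      all_goals omega
    · rintro (⟨rfl, rfl⟩ | hkl | hkl)
      · exact Or.inl ⟨rfl, rfl⟩
      all_goals omega

lemma adj_interior_iff (h : IsTheta G len p) {i : ι} {k : ℕ} (hk : k ≠ 0) (hki : k < len i)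
    {x : V} : G.Adj (p i k) x ↔ x = p i (k - 1) ∨ x = p i (k + 1) := by
  constructor
  · intro hadj
    obtain ⟨j, l, hl, hx⟩ := (h.adj_iff _ _).mp hadj
    rcases Sym2.eq_iff.mp hx with ⟨hkl, rfl⟩ | ⟨hkl, rfl⟩
    · rcases (h.eq_iff i j k hki.le l hl.le).mp hkl with ⟨rfl, rfl⟩ | h | h
      · exact Or.inr rfl
      all_goals omega
    · rcases (h.eq_iff i j k hki.le (l + 1) hl).mp hkl with ⟨rfl, rfl⟩ | h | h
      · exact Or.inl rfl
      all_goals omega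
  · rintro (rfl | rfl)
    · have := (h.adj (i := i) (k := k - 1) (by omega)).symm
      rwa [Nat.sub_add_cancel (Nat.one_le_iff_ne_zero.mpr hk)] at this
    · exact h.adj hki

lemma adj_start_iff (h : IsTheta G len p) (hlen : ∀ i, 2 ≤ len i) {i : ι} {x : V} :
    G.Adj (p i 0) x ↔ ∃ j, p j 1 = x := by
  have hstart : ∀ j, p i 0 = p j 0 := fun j =>
    (h.eq_iff i j 0 (Nat.zero_le _) 0 (Nat.zero_le _)).mpr (by simp)
  constructor
  · intro hadj
    obtain ⟨j, l, hl, hx⟩ := (h.adj_iff _ _).mp hadj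
    have hi := hlen i
    rcases Sym2.eq_iff.mp hx with ⟨hkl, rfl⟩ | ⟨hkl, rfl⟩
    · rcases (h.eq_iff i j 0 (Nat.zero_le _) l hl.le).mp hkl with ⟨rfl, rfl⟩ | ⟨-, rfl⟩ | h
      · exact ⟨i, rfl⟩
      · exact ⟨j, rfl⟩
      · omega
    · rcases (h.eq_iff i j 0 (Nat.zero_le _) (l + 1) hl).mp hkl with h | h | h <;> omega
  · rintro ⟨j, rfl⟩
    exact hstart j ▸ h.adj (by have := hlen j; omega)

lemma first_injective (h : IsTheta G len p) (hlen : ∀ i, 2 ≤ len i) :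
    Function.Injective fun i => p i 1 := by
  intro i j hij
  have hi := hlen i
  have hj := hlen j
  rcases (h.eq_iff i j 1 (by omega) 1 (by omega)).mp hij with h | h | h
  · exact h.1
  all_goals omega

lemma degN_interior (h : IsTheta G len p) {i : ι} {k : ℕ} (hk : k ≠ 0) (hki : k < len i) :
    G.degN (p i k) = 2 := by
  have hnbr : G.neighborSet (p i k) = {p i (k - 1), p i (k + 1)} :=
    Set.ext fun x => h.adj_interior_iff hk hki
  rw [degN, hnbr, Set.ncard_pair]
  rw [Ne, h.eq_iff i i (k - 1) (by omega) (k + 1) hki]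
  omega

lemma degN_start (h : IsTheta G len p) (hlen : ∀ i, 2 ≤ len i) (i : ι) :
    G.degN (p i 0) = Nat.card ι := by
  have hnbr : G.neighborSet (p i 0) = Set.range fun j => p j 1 :=
    Set.ext fun x => h.adj_start_iff hlen
  rw [degN, hnbr, Set.ncard_range_of_injective (h.first_injective hlen)]

lemma degN_finish (h : IsTheta G len p) (hlen : ∀ i, 2 ≤ len i) (i : ι) :
    G.degN (p i (len i)) = Nat.card ι :=
  h.reverse.degN_start hlen i

lemma degN_eq_two_or (h : IsTheta G len p) (hlen : ∀ i, 2 ≤ len i) (x : V) :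
    G.degN x = 2 ∨ G.degN x = Nat.card ι := by
  obtain ⟨i, k, hk, rfl⟩ := h.surj x
  rcases eq_or_ne k 0 with rfl | hk0
  · exact Or.inr (h.degN_start hlen i)
  · rcases hk.eq_or_lt with rfl | hki
    · exact Or.inr (h.degN_finish hlen i)
    · exact Or.inl (h.degN_interior hk0 hki)

end IsTheta

end Theta

section ThetaGirth

variable {V ι : Type*} {G : SimpleGraph V} {len : ι → ℕ} {p : ι → ℕ → V} {S : Set V}

/-- The closed walk out along `p i` and back along `p j`, at the positions
`0, …, len i + len j`. -/
def legLoop (len : ι → ℕ) (p : ι → ℕ → V) (i j : ι) (k : ℕ) : V :=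
  if k ≤ len i then p i k else p j (len i + len j - k)

namespace IsTheta

lemma start_eq (h : IsTheta G len p) (i j : ι) : p i 0 = p j 0 :=
  (h.eq_iff i j 0 (Nat.zero_le _) 0 (Nat.zero_le _)).mpr (by simp)

lemma finish_eq (h : IsTheta G len p) (i j : ι) : p i (len i) = p j (len j) :=
  (h.eq_iff i j (len i) le_rfl (len j) le_rfl).mpr (by simp)

lemma adj_legLoop (h : IsTheta G len p) {i j : ι} {k : ℕ} (hk : k < len i + len j) :
    G.Adj (legLoop len p i j k) (legLoop len p i j (k + 1)) := by
  have hback : ∀ {l}, l < len j → G.Adj (p j (l + 1)) (p j l) := fun hl => (h.adj hl).symm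
  unfold legLoop
  rcases lt_trichotomy k (len i) with hki | rfl | hki
  · rw [if_pos hki.le, if_pos (Nat.succ_le_of_lt hki)]
    exact h.adj hki
  · rw [if_pos le_rfl, if_neg (by omega), h.finish_eq i j,
      show len j = len i + len j - (len i + 1) + 1 by omega]
    convert hback (l := len i + len j - (len i + 1)) (by omega) using 2
    omega
  · rw [if_neg (by omega), if_neg (by omega),
      show len i + len j - k = len i + len j - (k + 1) + 1 by omega]
    exact hback (by omega)

lemma injOn_legLoop (h : IsTheta G len p) {i j : ι} (hij : i ≠ j) :
    Set.InjOn (legLoop len p i j) (Set.Iio (len i + len j)) := by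
  intro k hk l hl hkl
  simp only [Set.mem_Iio] at hk hl
  unfold legLoop at hkl
  split_ifs at hkl with hki hli hli
  · rcases (h.eq_iff i i k hki l hli).mp hkl with h | h | h <;> omega
  · rcases (h.eq_iff i j k hki _ (by omega)).mp hkl with h | h | h
    · exact absurd h.1 hij
    all_goals omega
  · rcases (h.eq_iff j i _ (by omega) l hli).mp hkl with h | h | h
    · exact absurd h.1.symm hij
    all_goals omega
  · rcases (h.eq_iff j j _ (by omega) _ (by omega)).mp hkl with h | h | h <;> omega

lemma egirth_le (h : IsTheta G len p) (hlen : ∀ i, 2 ≤ len i) {i j : ι} (hij : i ≠ j) :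
    G.egirth ≤ (len i + len j : ℕ) := by
  obtain ⟨d, hd⟩ : ∃ d, len i + len j = d + 1 := ⟨len i + len j - 1, by have := hlen i; omega⟩
  have hi := hlen i
  have hj := hlen j
  have hclosed : legLoop len p i j (d + 1) = legLoop len p i j 0 := by
    rw [legLoop, legLoop, if_neg (by omega), if_pos (Nat.zero_le _), ← hd, Nat.sub_self,
      h.start_eq j i]
  rw [hd]
  refine egirth_le_of_injOn_of_adj (y := legLoop len p i j) (by omega)
    (fun k hk => h.adj_legLoop (by omega)) ?_ (hclosed ▸ h.adj_legLoop (by omega))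
  exact (h.injOn_legLoop hij).mono fun k hk => by
    simp only [Set.mem_Iic, Set.mem_Iio] at hk ⊢
    omega

lemma neighbors_mem (h : IsTheta G len p) (hS : ∀ x ∈ S, (G.neighborSet x ∩ S).Nontrivial)
    {i : ι} {k : ℕ} (hk : k ≠ 0) (hki : k < len i) (hmem : p i k ∈ S) :
    p i (k - 1) ∈ S ∧ p i (k + 1) ∈ S := by
  obtain ⟨x, ⟨hx, hxS⟩, hne⟩ := (hS _ hmem).exists_ne (p i (k - 1))
  obtain ⟨y, ⟨hy, hyS⟩, hne'⟩ := (hS _ hmem).exists_ne (p i (k + 1))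
  obtain rfl := ((h.adj_interior_iff hk hki).mp hx).resolve_left hne
  obtain rfl := ((h.adj_interior_iff hk hki).mp hy).resolve_right hne'
  exact ⟨hyS, hxS⟩

lemma leg_mem (h : IsTheta G len p) (hS : ∀ x ∈ S, (G.neighborSet x ∩ S).Nontrivial)
    {i : ι} {k : ℕ} (hk : k ≠ 0) (hki : k < len i) (hmem : p i k ∈ S) :
    ∀ l ≤ len i, p i l ∈ S := by
  have hup : ∀ l, k ≤ l → l ≤ len i → p i l ∈ S := by
    intro l hl
    induction l, hl using Nat.le_induction with
    | base => exact fun _ => hmem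
    | succ l hkl ih => exact fun hl => (h.neighbors_mem hS (by omega) hl (ih (by omega))).2
  have hdown : ∀ n ≤ k, p i (k - n) ∈ S := by
    intro n
    induction n with
    | zero => exact fun _ => hmem
    | succ n ih => exact fun hn => (h.neighbors_mem hS (by omega) (by omega) (ih (by omega))).1
  intro l hl
  rcases le_total k l with hkl | hlk
  · exact hup l hkl hl
  · simpa only [Nat.sub_sub_self hlk] using hdown (k - l) (Nat.sub_le _ _)

lemma start_mem (h : IsTheta G len p) (hlen : ∀ i, 2 ≤ len i) (hne : S.Nonempty)
    (hS : ∀ x ∈ S, (G.neighborSet x ∩ S).Nontrivial) : ∃ i, p i 0 ∈ S := by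
  obtain ⟨x, hx⟩ := hne
  obtain ⟨i, k, hk, rfl⟩ := h.surj x
  rcases eq_or_ne k 0 with rfl | hk0
  · exact ⟨i, hx⟩
  rcases hk.lt_or_eq with hki | rfl
  · exact ⟨i, h.leg_mem hS hk0 hki hx 0 (Nat.zero_le _)⟩
  · obtain ⟨y, hy, hyS⟩ := (hS _ hx).nonempty
    obtain ⟨j, rfl⟩ := (h.reverse.adj_start_iff hlen (i := i)).mp hy
    have hj := hlen j
    exact ⟨j, h.leg_mem hS (by omega) (by omega) hyS 0 (Nat.zero_le _)⟩

lemma exists_add_le_ncard [Finite V] (h : IsTheta G len p) (hlen : ∀ i, 2 ≤ len i)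
    (hne : S.Nonempty) (hS : ∀ x ∈ S, (G.neighborSet x ∩ S).Nontrivial) :
    ∃ i j, i ≠ j ∧ len i + len j ≤ S.ncard := by
  obtain ⟨a, ha⟩ := h.start_mem hlen hne hS
  obtain ⟨x, ⟨hx, hxS⟩, y, ⟨hy, hyS⟩, hxy⟩ := hS _ ha
  obtain ⟨i, rfl⟩ := (h.adj_start_iff hlen).mp hx
  obtain ⟨j, rfl⟩ := (h.adj_start_iff hlen).mp hy
  have hij : i ≠ j := fun hij => hxy (hij ▸ rfl)
  have hi := h.leg_mem hS one_ne_zero (hlen i) hxS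
  have hj := h.leg_mem hS one_ne_zero (hlen j) hyS
  refine ⟨i, j, hij, ?_⟩
  rw [← Nat.card_Iio (len i + len j), ← Set.ncard_coe_finset, Finset.coe_Iio,
    ← (h.injOn_legLoop hij).ncard_image]
  refine Set.ncard_le_ncard ?_ (Set.toFinite _)
  rintro _ ⟨k, -, rfl⟩
  unfold legLoop
  split_ifs with hk
  · exact hi k hk
  · exact hj _ (by omega)

end IsTheta

lemma nontrivial_neighborSet_inter_support {x y : V} {w : G.Walk x x} (hw : w.IsCycle)
    (hy : y ∈ w.support) : (G.neighborSet y ∩ {z | z ∈ w.support}).Nontrivial := by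
  have htwo := hw.ncard_neighborSet_toSubgraph_eq_two hy
  have hone := Set.one_lt_ncard_iff_nontrivial_and_finite.mp (htwo ▸ one_lt_two)
  refine hone.1.mono ?_
  exact fun z hz => ⟨w.toSubgraph.adj_sub hz,
    w.mem_verts_toSubgraph.mp (w.toSubgraph.edge_vert hz.symm)⟩

lemma ncard_support_le_length {x : V} {w : G.Walk x x} (hw : w.IsCycle) :
    {z | z ∈ w.support}.ncard ≤ w.length := by
  classical
  have hsub : {z | z ∈ w.support} ⊆ (w.support.tail.toFinset : Set V) := by
    intro z hz
    rcases w.mem_support_iff.mp hz with rfl | hz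
    · simpa using w.end_mem_tail_support hw.not_nil
    · simpa using hz
  calc {z | z ∈ w.support}.ncard ≤ w.support.tail.toFinset.card :=
        Set.ncard_coe_finset _ ▸ Set.ncard_le_ncard hsub
    _ ≤ w.support.tail.length := List.toFinset_card_le _
    _ = w.length := by simp

lemma IsTheta.le_egirth [Finite V] {g : ℕ} (h : IsTheta G len p) (hlen : ∀ i, 2 ≤ len i)
    (hg : Pairwise fun i j => g ≤ len i + len j) : (g : ℕ∞) ≤ G.egirth := by
  refine SimpleGraph.le_egirth.mpr fun x w hw => ?_
  obtain ⟨i, j, hij, hle⟩ := h.exists_add_le_ncard (S := {z | z ∈ w.support}) hlen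
    ⟨x, w.start_mem_support⟩ fun y hy => nontrivial_neighborSet_inter_support hw hy
  exact_mod_cast (hg hij).trans (hle.trans (ncard_support_le_length hw))

end ThetaGirth

section Planarity

variable {V W : Type*} {G : SimpleGraph V} {H : SimpleGraph W} {S : Set V} {p q : V}

lemma degN_completeGraph [Finite W] (w : W) : (completeGraph W).degN w = Nat.card W - 1 := by
  have hnbr : (completeGraph W).neighborSet w = {w}ᶜ := by
    ext
    simp [eq_comm]
  rw [degN, hnbr, Set.ncard_compl, Set.ncard_singleton]

lemma degN_completeBipartiteGraph_inl (v : V) :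
    (completeBipartiteGraph V W).degN (Sum.inl v) = Nat.card W := by
  have hnbr : (completeBipartiteGraph V W).neighborSet (Sum.inl v) = Set.range Sum.inr := by
    ext (_ | _) <;> simp
  rw [degN, hnbr, Set.ncard_range_of_injective Sum.inr_injective]

lemma degN_completeBipartiteGraph_inr (w : W) :
    (completeBipartiteGraph V W).degN (Sum.inr w) = Nat.card V := by
  have hnbr : (completeBipartiteGraph V W).neighborSet (Sum.inr w) = Set.range Sum.inl := by
    ext (_ | _) <;> simp
  rw [degN, hnbr, Set.ncard_range_of_injective Sum.inl_injective]

lemma sum_degN_eq_twice_card_edgeSet [Fintype V] : ∑ v, G.degN v = 2 * Nat.card G.edgeSet := by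
  classical
  rw [Nat.card_eq_fintype_card, ← edgeFinset_card, ← G.sum_degrees_eq_twice_card_edges]
  exact Finset.sum_congr rfl fun v _ => by
    rw [degN, ← G.card_neighborSet_eq_degree, Set.ncard_eq_toFinset_card', Set.toFinset_card]

lemma exists_notMem_notMem_of_pairwise_disjoint {f : W → Set V} (hW : 3 ≤ Nat.card W)
    (hf : Pairwise fun w w' => Disjoint (f w) (f w')) (p q : V) : ∃ w, p ∉ f w ∧ q ∉ f w := by
  have := Nat.finite_of_card_ne_zero (show Nat.card W ≠ 0 by omega)
  have hone : ∀ x, {w | x ∈ f w}.ncard ≤ 1 := by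
    refine fun x => Set.ncard_le_one_iff_subsingleton.mpr fun w hw w' hw' => ?_
    by_contra hne
    exact Set.disjoint_left.mp (hf hne) hw hw'
  by_contra! hall
  have huniv : {w | p ∈ f w} ∪ {w | q ∈ f w} = Set.univ :=
    Set.eq_univ_of_forall fun w => or_iff_not_imp_left.mpr (hall w)
  have := Set.ncard_union_le {w | p ∈ f w} {w | q ∈ f w}
  rw [huniv, Set.ncard_univ] at this
  have hp := hone p
  have hq := hone q
  omega

variable [Finite V]

lemma degN_induce_add_ncard_diff (S : Set V) (v : S) :
    (G.induce S).degN v + (G.neighborSet v \ S).ncard = G.degN v := by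
  have hinside : (Subtype.val '' (G.induce S).neighborSet v).ncard
      = (G.neighborSet v ∩ S).ncard := by
    congr 1
    ext x
    simp [and_comm]
  rw [degN, degN, ← Set.ncard_inter_add_ncard_sdiff_eq_ncard (G.neighborSet v) S, ← hinside,
    Set.ncard_image_of_injective _ Subtype.val_injective]

/-- `G.induce S` contains a spanning tree, so at most two of the half-edges at `S` leave `S`. -/
lemma ncard_outerNeighbors_le_two (hconn : (G.induce S).Connected)
    (hdeg : ∀ v ∈ S, G.degN v ≤ 2) : {x | x ∉ S ∧ ∃ v ∈ S, G.Adj v x}.ncard ≤ 2 := by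
  have := Fintype.ofFinite S
  have hcover : {x | x ∉ S ∧ ∃ v ∈ S, G.Adj v x} ⊆ ⋃ v : S, G.neighborSet v \ S :=
    fun x ⟨hxS, v, hv, hvx⟩ => Set.mem_iUnion.mpr ⟨⟨v, hv⟩, hvx, hxS⟩
  have hout : {x | x ∉ S ∧ ∃ v ∈ S, G.Adj v x}.ncard ≤ ∑ v : S, (G.neighborSet v \ S).ncard :=
    (Set.ncard_le_ncard hcover).trans (Set.ncard_iUnion_le_of_fintype _)
  have htree := hconn.card_vert_le_card_edgeSet_add_one
  have hsum : ∑ v : S, ((G.induce S).degN v + (G.neighborSet v \ S).ncard) ≤ ∑ _v : S, 2 :=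
    Finset.sum_le_sum fun v _ => (degN_induce_add_ncard_diff S v).trans_le (hdeg v v.2)
  rw [Finset.sum_add_distrib, sum_degN_eq_twice_card_edgeSet, Finset.sum_const, smul_eq_mul,
    Finset.card_univ, ← Nat.card_eq_fintype_card] at hsum
  omega

lemma exists_degN_le_two_of_isMinorOf (hdeg : ∀ v, v ≠ p → v ≠ q → G.degN v ≤ 2)
    (hW : 3 ≤ Nat.card W) (hH : H.IsMinorOf G) : ∃ w, H.degN w ≤ 2 := by
  obtain ⟨f, hconn, hdisj, hadj⟩ := hH
  obtain ⟨w, hp, hq⟩ := exists_notMem_notMem_of_pairwise_disjoint hW hdisj p q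
  have hdeg' : ∀ v ∈ f w, G.degN v ≤ 2 := fun v hv =>
    hdeg v (fun h => hp (h ▸ hv)) (fun h => hq (h ▸ hv))
  refine ⟨w, le_trans ?_ (ncard_outerNeighbors_le_two (hconn w) hdeg')⟩
  choose a ha b hb hab using fun w' (hw' : H.Adj w w') => hadj hw'
  have hinj : ∀ w₁ w₂ h₁ h₂, b w₁ h₁ = b w₂ h₂ → w₁ = w₂ := by
    intro w₁ w₂ h₁ h₂ heq
    by_contra hne
    exact Set.disjoint_left.mp (hdisj hne) (hb w₁ h₁) (heq ▸ hb w₂ h₂)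
  rw [degN, ← Nat.card_coe_set_eq, ← Nat.card_coe_set_eq]
  refine Nat.card_le_card_of_injective (fun w' => ⟨b w' w'.2, ?_, a w' w'.2, ha _ _, hab _ _⟩)
    fun w₁ w₂ h => Subtype.ext (hinj _ _ _ _ (congrArg Subtype.val h))
  exact fun hmem => Set.disjoint_left.mp (hdisj w'.2.ne) hmem (hb _ _)

lemma isPlanar_of_degN_le_two (p q : V) (hdeg : ∀ v, v ≠ p → v ≠ q → G.degN v ≤ 2) :
    G.IsPlanar := by
  constructor <;> intro hminor <;>
    obtain ⟨w, hw⟩ := exists_degN_le_two_of_isMinorOf hdeg (by simp) hminor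
  · simp [degN_completeGraph] at hw
  · rcases w with w | w <;>
      simp [degN_completeBipartiteGraph_inl, degN_completeBipartiteGraph_inr] at hw

lemma IsTheta.isPlanar {ι : Type*} {len : ι → ℕ} {p : ι → ℕ → V} (h : IsTheta G len p) (i : ι) :
    G.IsPlanar := by
  refine isPlanar_of_degN_le_two (p i 0) (p i (len i)) fun v hstart hfinish => ?_
  obtain ⟨j, k, hk, rfl⟩ := h.surj v
  refine (h.degN_interior ?_ (hk.lt_of_ne ?_)).le
  · rintro rfl
    exact hstart (h.start_eq j i)
  · rintro rfl
    exact hfinish (h.finish_eq j i)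

end Planarity

section Ograph

variable {m g : ℕ}

namespace Ograph

/-- The lengths of the paths of `O_{m,g}`; `none` is the short one. -/
def len (m g : ℕ) : Option (Fin (m - 1)) → ℕ
  | none => g / 2
  | some _ => (g + 1) / 2

lemma two_le_len (hg : 4 ≤ g) (l : Option (Fin (m - 1))) : 2 ≤ len m g l := by
  cases l <;> simp only [len] <;> omega

lemma le_len_add_len : Pairwise fun l l' => g ≤ len m g l + len m g l' := by
  rintro (_ | i) (_ | i') hne <;> simp only [len]
  · exact absurd rfl hne
  all_goals omega

/-- The paths of `O_{m,g}` from `inl 0` to `inl 1`, extended by `inl 1`. -/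
def path (m g : ℕ) : Option (Fin (m - 1)) → ℕ →
    Fin 2 ⊕ (Fin (m - 1) × Fin ((g + 1) / 2 - 1) ⊕ Fin (g / 2 - 1))
  | _, 0 => Sum.inl 0
  | none, k + 1 => if h : k < g / 2 - 1 then Sum.inr (Sum.inr ⟨k, h⟩) else Sum.inl 1
  | some i, k + 1 => if h : k < (g + 1) / 2 - 1 then Sum.inr (Sum.inl (i, ⟨k, h⟩)) else Sum.inl 1

lemma path_zero (l : Option (Fin (m - 1))) : path m g l 0 = Sum.inl 0 := by
  cases l <;> rfl

lemma path_len (hg : 4 ≤ g) (l : Option (Fin (m - 1))) : path m g l (len m g l) = Sum.inl 1 := by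
  obtain ⟨n, hn⟩ : ∃ n, len m g l = n + 1 :=
    Nat.exists_eq_add_one_of_ne_zero (by have := two_le_len hg l; omega)
  rw [hn]
  cases l <;> simp only [len] at hn <;> exact dif_neg (by omega)

lemma path_none_add_one (j : Fin (g / 2 - 1)) : path m g none (j + 1) = Sum.inr (Sum.inr j) := by
  simp [path]

lemma path_some_add_one (i : Fin (m - 1)) (j : Fin ((g + 1) / 2 - 1)) :
    path m g (some i) (j + 1) = Sum.inr (Sum.inl (i, j)) := by
  simp [path]

lemma path_eq_iff (hg : 4 ≤ g) (l l' : Option (Fin (m - 1))) {k k' : ℕ} (hk : k ≤ len m g l)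
    (hk' : k' ≤ len m g l') : path m g l k = path m g l' k' ↔
      l = l' ∧ k = k' ∨ k = 0 ∧ k' = 0 ∨ k = len m g l ∧ k' = len m g l' := by
  rcases l with _ | i <;> rcases l' with _ | i' <;> rcases k with _ | k <;>
    rcases k' with _ | k' <;> grind [len, path]

lemma adj_path (hg : 4 ≤ g) (l : Option (Fin (m - 1))) {k : ℕ} (hk : k < len m g l) :
    (Ograph m g).Adj (path m g l k) (path m g l (k + 1)) := by
  rcases l with _ | i <;> rcases k with _ | k <;> simp only [Ograph, fromRel_adj] <;>
    grind [len, path]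

lemma isTheta (hg : 4 ≤ g) : IsTheta (Ograph m g) (len m g) (path m g) where
  toIsPathCover := by
    refine isPathCover_fromRel ?_ (fun l k hk => adj_path hg l hk) ?_
    · rintro (u | ⟨i, j⟩ | j)
      · fin_cases u
        · exact ⟨none, 0, Nat.zero_le _, rfl⟩
        · exact ⟨none, len m g none, le_rfl, path_len hg none⟩
      · exact ⟨some i, j + 1, by simp only [len]; omega, path_some_add_one i j⟩
      · exact ⟨none, j + 1, by simp only [len]; omega, path_none_add_one j⟩
    · rintro (u | ⟨i, j⟩ | j) (u' | ⟨i', j'⟩ | j') h <;> simp only at h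
      · rcases h with ⟨hu, hj⟩ | ⟨hu, hj⟩
        · refine ⟨some i', 0, by simp only [len]; omega, ?_⟩
          rw [path_zero, ← path_some_add_one, hj, Fin.ext (b := 0) hu]
        · refine ⟨some i', j' + 1, by simp only [len]; omega, ?_⟩
          rw [path_some_add_one, Fin.ext (b := 1) hu, ← path_len hg (some i'), Sym2.eq_swap,
            show j'.val + 1 + 1 = len m g (some i') by simp only [len]; omega]
      · rcases h with ⟨hu, hj⟩ | ⟨hu, hj⟩
        · refine ⟨none, 0, by simp only [len]; omega, ?_⟩
          rw [path_zero, ← path_none_add_one, hj, Fin.ext (b := 0) hu]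
        · refine ⟨none, j' + 1, by simp only [len]; omega, ?_⟩
          rw [path_none_add_one, Fin.ext (b := 1) hu, ← path_len hg none, Sym2.eq_swap,
            show j'.val + 1 + 1 = len m g none by simp only [len]; omega]
      · obtain ⟨rfl, hj⟩ := h
        exact ⟨some i, j + 1, by simp only [len]; omega, by
          rw [path_some_add_one, ← hj, path_some_add_one]⟩
      · exact ⟨none, j + 1, by simp only [len]; omega, by
          rw [path_none_add_one, ← h, path_none_add_one]⟩
  eq_iff l l' k hk k' hk' := path_eq_iff hg l l' hk hk'

lemma isPlanar (hg : 4 ≤ g) : (Ograph m g).IsPlanar :=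
  (isTheta hg).isPlanar none

lemma egirth_eq (hm : 2 ≤ m) (hg : 4 ≤ g) : (Ograph m g).egirth = g := by
  refine le_antisymm ?_ ((isTheta hg).le_egirth (two_le_len hg) le_len_add_len)
  have hle := (isTheta (m := m) hg).egirth_le (two_le_len hg)
    (Option.some_ne_none (⟨0, by omega⟩ : Fin (m - 1)))
  rwa [show len m g (some ⟨0, by omega⟩) + len m g none = g by simp only [len]; omega] at hle

lemma isBigirthGraph (hm : 2 ≤ m) (hg : 4 ≤ g) : IsBigirthGraph (Ograph m g) 2 m g := by
  have hcard : Nat.card (Option (Fin (m - 1))) = m := by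
    rw [Finite.card_option, Nat.card_fin]
    omega
  have htheta := isTheta (m := m) hg
  have hlen := two_le_len (m := m) hg
  refine ⟨by rw [girth, egirth_eq hm hg, ENat.toNat_natCast], ?_, ?_, ?_⟩
  · simpa only [hcard] using htheta.degN_eq_two_or hlen
  · exact ⟨_, htheta.degN_interior one_ne_zero (hlen none)⟩
  · exact ⟨_, (htheta.degN_start hlen none).trans hcard⟩

end Ograph

/-- The common value of the two formulas for the minimum order of a `({2,m};g)`-graph. -/
def minOrder (m g : ℕ) : ℕ :=
  1 + g / 2 + (m - 1) * ((g - 1) / 2)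

lemma card_Ograph (hg : 2 ≤ g) :
    Fintype.card (Fin 2 ⊕ (Fin (m - 1) × Fin ((g + 1) / 2 - 1) ⊕ Fin (g / 2 - 1)))
      = minOrder m g := by
  simp only [Fintype.card_sum, Fintype.card_prod, Fintype.card_fin, minOrder]
  rw [show (g + 1) / 2 - 1 = (g - 1) / 2 by omega]
  omega

lemma minOrder_of_even (hm : m ≠ 0) (hg₀ : g ≠ 0) (hg : Even g) :
    minOrder m g = (m * (g - 2) + 4) / 2 := by
  obtain ⟨n, rfl⟩ := Nat.exists_eq_add_one_of_ne_zero hm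
  obtain ⟨h, rfl⟩ : ∃ h, g = 2 * (h + 1) := by
    obtain ⟨h, rfl⟩ := hg
    exact ⟨h - 1, by omega⟩
  have hdouble : (n + 1) * (2 * (h + 1) - 2) + 4 = 2 * minOrder (n + 1) (2 * (h + 1)) := by
    rw [minOrder, show 2 * (h + 1) / 2 = h + 1 by omega, show (2 * (h + 1) - 1) / 2 = h by omega,
      show 2 * (h + 1) - 2 = 2 * h by omega, Nat.add_sub_cancel]
    ring
  omega

lemma minOrder_of_odd (hm : m ≠ 0) (hg : Odd g) : minOrder m g = (m * (g - 1) + 2) / 2 := by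
  obtain ⟨n, rfl⟩ := Nat.exists_eq_add_one_of_ne_zero hm
  obtain ⟨h, rfl⟩ := hg
  have hdouble : (n + 1) * (2 * h + 1 - 1) + 2 = 2 * minOrder (n + 1) (2 * h + 1) := by
    rw [minOrder, show (2 * h + 1) / 2 = h by omega, show (2 * h + 1 - 1) / 2 = h by omega,
      Nat.add_sub_cancel, Nat.add_sub_cancel]
    ring
  omega

end Ograph

lemma exists_equiv_prod_bool_of_involutive {ι : Type*} [Fintype ι] {σ : ι → ι}
    (hσ : Function.Involutive σ) (hfix : ∀ a, σ a ≠ a) : Even (Fintype.card ι) ∧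
      ∃ e : ι ≃ Fin (Fintype.card ι / 2) × Bool, ∀ a, e (σ a) = ((e a).1, !(e a).2) := by
  classical
  let : LinearOrder ι := LinearOrder.lift' _ (Fintype.equivFin ι).injective
  let glue : {a // a < σ a} × Bool → ι := fun x => bif x.2 then σ x.1 else x.1
  have hglue : Function.Bijective glue := by
    constructor
    · rintro ⟨⟨a, ha⟩, _ | _⟩ ⟨⟨b, hb⟩, _ | _⟩ hab <;> dsimp only [glue, cond] at hab
      · simp only [hab]
      · rw [hab, hσ b] at ha
        exact absurd ha hb.asymm
      · rw [← hab, hσ a] at hb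
        exact absurd hb ha.asymm
      · simp only [hσ.injective hab]
    · intro a
      rcases (hfix a).lt_or_gt with ha | ha
      · exact ⟨(⟨σ a, by rwa [hσ a]⟩, true), hσ a⟩
      · exact ⟨(⟨a, ha⟩, false), rfl⟩
  have hcard : Fintype.card ι = Fintype.card {a // a < σ a} * 2 := by
    rw [← Fintype.card_of_bijective hglue, Fintype.card_prod, Fintype.card_bool]
  let half : {a // a < σ a} ≃ Fin (Fintype.card ι / 2) := Fintype.equivFinOfCardEq (by omega)
  let e := (Equiv.ofBijective glue hglue).symm.trans (half.prodCongr (Equiv.refl Bool))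
  refine ⟨hcard ▸ even_two.mul_left _, e, hglue.surjective.forall.mpr fun x => ?_⟩
  have heg : ∀ x, e (glue x) = (half x.1, x.2) := fun x => by
    rw [Equiv.trans_apply, Equiv.ofBijective_symm_apply_apply, Equiv.prodCongr_apply]
    rfl
  have hσglue : σ (glue x) = glue (x.1, !x.2) := by
    rcases x with ⟨a, _ | _⟩
    · rfl
    · exact hσ a
  rw [hσglue, heg, heg]

section Windmill

variable {V V' ι ι' : Type*} {G : SimpleGraph V} {G' : SimpleGraph V'} {g : ℕ} {σ : ι → ι}
  {σ' : ι' → ι'} {p : ι → ℕ → V} {p' : ι' → ℕ → V'}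

/-- `G` consists of cycles of length `g` sharing a single vertex. Each cycle is traversed from that
vertex in both directions, by the walks `p i` and `p (σ i)`, each stopping as soon as they have
covered the cycle together. -/
structure IsWindmill (G : SimpleGraph V) (g : ℕ) (σ : ι → ι) (p : ι → ℕ → V) : Prop
    extends IsPathCover G (fun _ => (g + 1) / 2) p where
  eq_iff : ∀ i j, ∀ k ≤ (g + 1) / 2, ∀ l ≤ (g + 1) / 2,
    (p i k = p j l ↔ i = j ∧ k = l ∨ k = 0 ∧ l = 0 ∨ j = σ i ∧ k + l = g)

lemma IsWindmill.nonempty_iso (h : IsWindmill G g σ p) (h' : IsWindmill G' g σ' p') (e : ι ≃ ι')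
    (hσ : ∀ i, e (σ i) = σ' (e i)) : Nonempty (G ≃g G') := by
  refine h.toIsPathCover.nonempty_iso h'.toIsPathCover e (fun _ => rfl) fun i j k hk l hl => ?_
  rw [h.eq_iff i j k hk l hl, h'.eq_iff _ _ k hk l hl, ← hσ, e.apply_eq_iff_eq, e.apply_eq_iff_eq]

end Windmill

section Fgraph

variable {m g : ℕ}

namespace Fgraph

/-- The cycles of `F_{m,g}`, traversed from the common vertex in both directions. -/
def leg (m g : ℕ) : Fin (m / 2) × Bool → ℕ → Unit ⊕ Fin (m / 2) × Fin (g - 1)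
  | _, 0 => Sum.inl ()
  | (c, false), k + 1 => if h : k < g - 1 then Sum.inr (c, ⟨k, h⟩) else Sum.inl ()
  | (c, true), k + 1 => if h : k < g - 1 then Sum.inr (c, Fin.rev ⟨k, h⟩) else Sum.inl ()

lemma leg_zero (x : Fin (m / 2) × Bool) : leg m g x 0 = Sum.inl () := by
  rcases x with ⟨c, _ | _⟩ <;> rfl

lemma leg_false_add_one (c : Fin (m / 2)) (j : Fin (g - 1)) :
    leg m g (c, false) (j + 1) = Sum.inr (c, j) := by
  simp [leg]

lemma leg_true_rev_add_one (c : Fin (m / 2)) (j : Fin (g - 1)) :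
    leg m g (c, true) (j.rev + 1) = Sum.inr (c, j) := by
  simp only [leg, j.rev.2, dite_true, Fin.eta, Fin.rev_rev]

lemma leg_eq_iff (x y : Fin (m / 2) × Bool) {k l : ℕ} (hk : k < g) (hl : l < g) :
    leg m g x k = leg m g y l ↔
      x = y ∧ k = l ∨ k = 0 ∧ l = 0 ∨ y = (x.1, !x.2) ∧ k + l = g := by
  rcases x with ⟨c, _ | _⟩ <;> rcases y with ⟨d, _ | _⟩ <;> rcases k with _ | k <;>
    rcases l with _ | l <;> grind [leg]

lemma adj_leg (x : Fin (m / 2) × Bool) {k : ℕ} (hk : k + 1 < g) :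
    (Fgraph m g).Adj (leg m g x k) (leg m g x (k + 1)) := by
  rcases x with ⟨c, _ | _⟩ <;> rcases k with _ | k <;> simp only [Fgraph, fromRel_adj] <;>
    grind [leg]

lemma isWindmill (hm : 2 ≤ m) (hg : 3 ≤ g) :
    IsWindmill (Fgraph m g) g (fun x => (x.1, !x.2)) (leg m g) where
  toIsPathCover := by
    refine isPathCover_fromRel ?_ (fun x k hk => adj_leg x (by omega)) ?_
    · rintro (_ | ⟨c, j⟩)
      · exact ⟨(⟨0, by omega⟩, false), 0, Nat.zero_le _, rfl⟩
      · by_cases hj : j + 1 ≤ (g + 1) / 2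
        · exact ⟨(c, false), j + 1, hj, leg_false_add_one c j⟩
        · exact ⟨(c, true), j.rev + 1, by rw [Fin.val_rev]; omega, leg_true_rev_add_one c j⟩
    · rintro (_ | ⟨c, j⟩) (_ | ⟨c', j'⟩) h <;> simp only at h
      · rcases h with h | h
        · refine ⟨(c', false), 0, by omega, ?_⟩
          rw [leg_zero, ← leg_false_add_one, h]
        · refine ⟨(c', true), 0, by omega, ?_⟩
          rw [leg_zero, ← leg_true_rev_add_one, Fin.val_rev, h,
            show g - 1 - (g - 2 + 1) + 1 = 0 + 1 by omega]
      · obtain ⟨rfl, hj⟩ := h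
        by_cases hjg : j + 1 < (g + 1) / 2
        · exact ⟨(c, false), j + 1, hjg, by
            rw [leg_false_add_one, ← hj, leg_false_add_one]⟩
        · refine ⟨(c, true), j'.rev + 1, by rw [Fin.val_rev]; omega, ?_⟩
          have hrev : (j'.rev : ℕ) + 1 = j.rev := by
            rw [Fin.val_rev, Fin.val_rev]
            omega
          rw [leg_true_rev_add_one, hrev, leg_true_rev_add_one, Sym2.eq_swap]
  eq_iff x y k hk l hl := leg_eq_iff x y (by omega) (by omega)

end Fgraph

end Fgraph

section ExtremalSpider

variable {V ι : Type*} {G : SimpleGraph V} {g h : ℕ} {u v : V} {W : ι → ℕ → V} {r len : ι → ℕ}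

lemma IsNonbacktracking.exists_sym2_eq_of_adj {y : ℕ → V} (hy : IsNonbacktracking G y)
    (hgirth : (g : ℕ∞) ≤ G.egirth) {n k l : ℕ} (hn : n + 1 < g) (hk : k ≤ n) (hl : l ≤ n)
    (hadj : G.Adj (y k) (y l)) : ∃ t < n, s(y k, y l) = s(y t, y (t + 1)) := by
  rcases hy.eq_add_one_of_adj hgirth (by omega) (by omega) hadj with rfl | rfl
  · exact ⟨k, hl, rfl⟩
  · exact ⟨l, hk, Sym2.eq_swap⟩

namespace IsSpider

lemma isPathCover (hs : IsSpider G u W) (hgirth : (g : ℕ∞) ≤ G.egirth)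
    (hlen : ∀ i, len i + 1 < g) (hr : ∀ i, r i ≤ len i) (hsurj : ∀ x, ∃ i, ∃ k ≤ r i, W i k = x)
    (hcross : Pairwise fun i j => ∀ k ≤ r i, ∀ l ≤ r j, g ≤ k + l + 1 → G.Adj (W i k) (W j l) →
      ∃ e, ∃ t < len e, s(W i k, W j l) = s(W e t, W e (t + 1))) :
    IsPathCover G len W where
  surj x := by
    obtain ⟨i, k, hk, rfl⟩ := hsurj x
    exact ⟨i, k, hk.trans (hr i), rfl⟩
  adj_iff x y := by
    constructor
    · obtain ⟨i, k, hk, rfl⟩ := hsurj x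
      obtain ⟨j, l, hl, rfl⟩ := hsurj y
      intro hadj
      have hri := hr i
      have hrj := hr j
      rcases eq_or_ne i j with rfl | hij
      · exact ⟨i, (hs.nonbacktracking i).exists_sym2_eq_of_adj hgirth (hlen i) (hk.trans hri)
          (hl.trans hri) hadj⟩
      by_cases hkl : k + l = 1
      · obtain ⟨rfl, rfl⟩ | ⟨rfl, rfl⟩ : k = 0 ∧ l = 1 ∨ k = 1 ∧ l = 0 := by omega
        · exact ⟨j, 0, by omega, by rw [hs.zero, hs.zero]⟩
        · exact ⟨i, 0, by omega, by rw [hs.zero, hs.zero, Sym2.eq_swap]⟩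
      · exact hcross hij k hk l hl (hs.le_add_of_adj hgirth hij hkl hadj) hadj
    · rintro ⟨i, k, -, hxy⟩
      rw [← mem_edgeSet, hxy]
      exact (hs.nonbacktracking i).adj k

lemma eq_iff_of_finish (hs : IsSpider G u W) (hgirth : (g : ℕ∞) ≤ G.egirth)
    (hlen : ∀ i, len i < g) (hlen_add : Pairwise fun i j => len i + len j ≤ g + 1)
    (hfinish : ∀ i, W i (len i) = v) (i j : ι) {k l : ℕ} (hk : k ≤ len i) (hl : l ≤ len j) :
    W i k = W j l ↔ i = j ∧ k = l ∨ k = 0 ∧ l = 0 ∨ k = len i ∧ l = len j := by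
  have hinj : ∀ i, ∀ k ≤ len i, ∀ l ≤ len i, W i k = W i l → k = l := fun i k hk l hl =>
    (hs.injOn hgirth i).eq_iff (hk.trans_lt (hlen i)) (hl.trans_lt (hlen i)) |>.mp
  constructor
  · intro heq
    rcases eq_or_ne i j with rfl | hij
    · exact Or.inl ⟨rfl, hinj i k hk l hl heq⟩
    by_cases h0 : k + l = 0
    · omega
    have hij_add := hlen_add hij
    have hkl := hs.le_add_of_eq hgirth hij h0 heq
    rcases hk.eq_or_lt with rfl | hk
    · rw [hfinish, ← hfinish j] at heq
      exact Or.inr (Or.inr ⟨rfl, (hinj j _ le_rfl l hl heq).symm⟩)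
    · obtain rfl : l = len j := by omega
      rw [hfinish, ← hfinish i] at heq
      exact Or.inr (Or.inr ⟨hinj i k hk.le _ le_rfl heq, rfl⟩)
  · rintro (⟨rfl, rfl⟩ | ⟨rfl, rfl⟩ | ⟨rfl, rfl⟩)
    · rfl
    · rw [hs.zero, hs.zero]
    · rw [hfinish, hfinish]

lemma isTheta (hs : IsSpider G u W) (hgirth : (g : ℕ∞) ≤ G.egirth) (hg : 4 ≤ g)
    (hlen : ∀ i, len i + 1 < g) (hlen_add : Pairwise fun i j => len i + len j ≤ g + 1)
    (hsurj : ∀ x, ∃ i, ∃ k ≤ len i, W i k = x) (hfinish : ∀ i, W i (len i) = v) :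
    IsTheta G len W where
  toIsPathCover := by
    refine hs.isPathCover hgirth hlen (fun _ => le_rfl) hsurj fun i j hij k hk l hl hkl hadj => ?_
    rcases hk.eq_or_lt with rfl | hk
    · rw [hfinish, ← hfinish j] at hadj ⊢
      exact ⟨j, (hs.nonbacktracking j).exists_sym2_eq_of_adj hgirth (hlen j) le_rfl hl hadj⟩
    rcases hl.eq_or_lt with rfl | hl
    · rw [hfinish, ← hfinish i] at hadj ⊢
      exact ⟨i, (hs.nonbacktracking i).exists_sym2_eq_of_adj hgirth (hlen i) hk.le le_rfl hadj⟩
    have hij_add := hlen_add hij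
    have hkv := (hs.nonbacktracking i).adj k
    have hlv := (hs.nonbacktracking j).adj l
    rw [show k + 1 = len i by omega, hfinish] at hkv
    rw [show l + 1 = len j by omega, hfinish] at hlv
    exact absurd hkv (not_adj_of_adj_of_adj (le_trans (by exact_mod_cast hg) hgirth) hadj hlv)
  eq_iff i j k hk l hl :=
    hs.eq_iff_of_finish hgirth (fun i => Nat.lt_of_succ_lt (hlen i)) hlen_add hfinish i j hk hl

lemma exists_eq_of_tight (hs : IsSpider G u W) (hgirth : (g : ℕ∞) ≤ G.egirth)
    (hr : ∀ i, r i + 1 < g) (hrr : Pairwise fun i j => r i + r j < g)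
    (hsurj : ∀ x, ∃ i, ∃ k ≤ r i, W i k = x) (a : ι) :
    ∃ b ≠ a, r a + r b + 1 = g ∧ W a (r a + 1) = W b (r b) := by
  obtain ⟨b, k, hk, hab⟩ := hsurj (W a (r a + 1))
  have hra := hr a
  have hne : b ≠ a := by
    rintro rfl
    exact absurd (hs.injOn hgirth b (Set.mem_Iio.mpr (by omega)) (Set.mem_Iio.mpr hra) hab)
      (by omega)
  have hkg := hs.le_add_of_eq hgirth hne (by omega) hab
  have hba := hrr hne
  obtain rfl : k = r b := by omega
  exact ⟨b, hne, by omega, hab.symm⟩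

section Odd

variable {σ : ι → ι}

lemma eq_or_exists_of_adj (hs : IsSpider G u W) (hgirth : (2 * h + 1 : ℕ) ≤ G.egirth) (hh : 2 ≤ h)
    (hsurj : ∀ x, ∃ i, ∃ k ≤ h, W i k = x) {a : ι} {x : V} (hadj : G.Adj (W a h) x) :
    x = W a (h - 1) ∨ ∃ b ≠ a, W b h = x := by
  obtain ⟨b, k, hk, rfl⟩ := hsurj x
  rcases eq_or_ne b a with rfl | hba
  · have := (hs.nonbacktracking b).eq_add_one_of_adj hgirth (by omega) (by omega) hadj
    exact Or.inl (by rw [show k = h - 1 by omega])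
  · have := hs.le_add_of_adj hgirth hba.symm (by omega) hadj
    exact Or.inr ⟨b, hba, by rw [show h = k by omega]⟩

/-- The vertex `W a h` is adjacent to `W c h` for every other leg `c`, so a leg that does not run
into `W a h` after `h` steps would close a triangle. -/
lemma eq_of_card_le_degN [Finite ι] (hs : IsSpider G u W) (hgirth : (2 * h + 1 : ℕ) ≤ G.egirth)
    (hh : 2 ≤ h) (hsurj : ∀ x, ∃ i, ∃ k ≤ h, W i k = x) {a : ι}
    (hdeg : Nat.card ι ≤ G.degN (W a h)) {b : ι} (hba : b ≠ a) : W b (h + 1) = W a h := by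
  have hsubset : G.neighborSet (W a h) ⊆ insert (W a (h - 1)) ((fun b => W b h) '' {a}ᶜ) := by
    intro x hx
    rcases hs.eq_or_exists_of_adj hgirth hh hsurj hx with rfl | ⟨b, hba, rfl⟩
    · exact Set.mem_insert _ _
    · exact Set.mem_insert_of_mem _ ⟨b, hba, rfl⟩
  have hcard : (insert (W a (h - 1)) ((fun b => W b h) '' {a}ᶜ)).ncard ≤ Nat.card ι := by
    have hinsert := Set.ncard_insert_le (W a (h - 1)) ((fun b => W b h) '' {a}ᶜ)
    have himage := Set.ncard_image_le (f := fun b => W b h) ({a}ᶜ : Set ι).toFinite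
    rw [Set.ncard_compl, Set.ncard_singleton] at himage
    have := Nat.card_pos_iff.mpr ⟨⟨a⟩, ‹Finite ι›⟩
    omega
  have hnbr := Set.eq_of_subset_of_ncard_le hsubset (hcard.trans hdeg) (Set.toFinite _)
  have hadj : ∀ c ≠ a, G.Adj (W a h) (W c h) := fun c hca =>
    hnbr.ge (Set.mem_insert_of_mem _ ⟨c, hca, rfl⟩)
  obtain ⟨c, -, -, hbc⟩ := hs.exists_eq_of_tight hgirth (r := fun _ => h)
    (fun _ => by omega) (fun _ _ _ => by omega) hsurj b
  rcases eq_or_ne c a with rfl | hca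
  · exact hbc
  · have hbc_adj := (hs.nonbacktracking b).adj h
    rw [hbc] at hbc_adj
    have h4 : (4 : ℕ∞) ≤ G.egirth := le_trans (by exact_mod_cast (by omega : 4 ≤ 2 * h + 1)) hgirth
    exact absurd (hadj c hca) (not_adj_of_adj_of_adj h4 (hadj b hba) hbc_adj)

lemma adj_iff_of_degN_eq_two (hs : IsSpider G u W) (hgirth : (2 * h + 1 : ℕ) ≤ G.egirth)
    (hh : 2 ≤ h) (hσ : ∀ a, W a (h + 1) = W (σ a) h) {a : ι} (hdeg : G.degN (W a h) = 2) (b : ι) :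
    G.Adj (W a h) (W b h) ↔ b = σ a := by
  have hnext := (hs.nonbacktracking a).adj h
  have hprev := ((hs.nonbacktracking a).adj (h - 1)).symm
  have hne := (hs.nonbacktracking a).ne (h - 1)
  rw [show h - 1 + 1 = h by omega] at hprev
  rw [show h - 1 + 2 = h + 1 by omega] at hne
  have hnbr : {W a (h + 1), W a (h - 1)} = G.neighborSet (W a h) :=
    Set.eq_of_subset_of_ncard_le (Set.pair_subset hnext hprev)
      (by rw [Set.ncard_pair hne]; exact hdeg.le)
      (Set.finite_of_ncard_ne_zero (by rw [← degN]; omega))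
  have hleaf : ∀ c k, k ≤ h → W b h = W c k → b = c ∧ h = k := by
    intro c k hk heq
    by_contra hcon
    rcases eq_or_ne b c with rfl | hbc
    · exact hcon ⟨rfl, hs.injOn hgirth b (Set.mem_Iio.mpr (by omega))
        (Set.mem_Iio.mpr (by omega)) heq⟩
    · have := hs.le_add_of_eq hgirth hbc (by omega) heq
      omega
  constructor
  · intro hadj
    rcases hnbr.ge hadj with heq | heq
    · exact (hleaf (σ a) h le_rfl (heq.trans (hσ a))).1
    · exact absurd (hleaf a (h - 1) (by omega) heq).2 (by omega)
  · rintro rfl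
    exact hσ a ▸ hnext

lemma isWindmill (hs : IsSpider G u W) (hgirth : (2 * h + 1 : ℕ) ≤ G.egirth)
    (hh : 2 ≤ h) (hsurj : ∀ x, ∃ i, ∃ k ≤ h, W i k = x) (hσ : ∀ a, W a (h + 1) = W (σ a) h)
    (hadj : ∀ a b, G.Adj (W a h) (W b h) ↔ b = σ a)
    (hinv : Function.Involutive σ) : IsWindmill G (2 * h + 1) σ W where
  toIsPathCover := by
    refine hs.isPathCover hgirth (r := fun _ => h) (fun _ => by omega) (fun _ => by omega) hsurj
      fun i j _ k hk l hl hkl hkl_adj => ⟨i, h, by omega, ?_⟩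
    obtain ⟨rfl, rfl⟩ : k = h ∧ l = h := by omega
    rw [hσ, (hadj i j).mp hkl_adj]
  eq_iff i j k hk l hl := by
    have hend : ∀ i j, W i h = W j h → i = j := by
      intro i j heq
      by_contra hij
      have := hs.le_add_of_eq hgirth hij (by omega) heq
      omega
    constructor
    · intro heq
      rcases eq_or_ne i j with rfl | hij
      · exact Or.inl ⟨rfl, hs.injOn hgirth i (Set.mem_Iio.mpr (by omega))
          (Set.mem_Iio.mpr (by omega)) heq⟩
      by_cases h0 : k + l = 0
      · omega
      have hkl := hs.le_add_of_eq hgirth hij h0 heq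
      obtain ⟨rfl, rfl⟩ | ⟨rfl, rfl⟩ | ⟨rfl, rfl⟩ :
        k = h + 1 ∧ l = h ∨ k = h ∧ l = h + 1 ∨ k = h + 1 ∧ l = h + 1 := by omega
      · exact Or.inr (Or.inr ⟨(hend _ _ ((hσ i).symm.trans heq)).symm, by omega⟩)
      · rw [hend i (σ j) (heq.trans (hσ j)), hinv]
        exact Or.inr (Or.inr ⟨rfl, by omega⟩)
      · rw [hσ, hσ] at heq
        exact absurd (hinv.injective (hend _ _ heq)) hij
    · rintro (⟨rfl, rfl⟩ | ⟨rfl, rfl⟩ | ⟨rfl, hkl⟩)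
      · rfl
      · rw [hs.zero, hs.zero]
      · obtain ⟨rfl, rfl⟩ | ⟨rfl, rfl⟩ : k = h + 1 ∧ l = h ∨ k = h ∧ l = h + 1 := by omega
        · exact hσ i
        · rw [hσ, hinv]

end Odd

end IsSpider

end ExtremalSpider

section Extremal

variable {V ι : Type*} {G : SimpleGraph V} {g : ℕ} {u : V} {W : ι → ℕ → V}

section Truncation

variable [DecidableEq ι]

/-- The lengths to which the legs of a spider in a graph of girth `g` can be truncated so that they
are still disjoint: `⌊g / 2⌋` for leg `a` and `⌊(g - 1) / 2⌋` for the others. -/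
def truncation (g : ℕ) (a : ι) : ι → ℕ :=
  Function.update (fun _ => (g - 1) / 2) a (g / 2)

/-- The lengths of the paths of `O_{m,g}`, with `a` as the short one. -/
def thetaLen (g : ℕ) (a : ι) : ι → ℕ :=
  Function.update (fun _ => (g + 1) / 2) a (g / 2)

lemma truncation_le (a i : ι) : truncation g a i ≤ g / 2 := by
  simp only [truncation, Function.update_apply]
  split_ifs <;> omega

lemma truncation_le_thetaLen (a i : ι) : truncation g a i ≤ thetaLen g a i := by
  simp only [truncation, thetaLen, Function.update_apply]
  split_ifs <;> omega

lemma truncation_add_truncation_lt (hg : g ≠ 0) (a : ι) :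
    Pairwise fun i j => truncation g a i + truncation g a j < g := by
  intro i j hij
  simp only [truncation, Function.update_apply]
  split_ifs with hi hj
  · exact absurd (hi.trans hj.symm) hij
  all_goals omega

lemma one_add_sum_truncation [Fintype ι] (a : ι) :
    1 + ∑ i, truncation g a i = minOrder (Fintype.card ι) g := by
  rw [truncation, Finset.sum_update_of_mem (Finset.mem_univ a), Finset.sum_const, smul_eq_mul,
    Finset.card_univ_sdiff, Finset.card_singleton, minOrder, add_assoc]

lemma thetaLen_le (a i : ι) : thetaLen g a i ≤ (g + 1) / 2 := by
  simp only [thetaLen, Function.update_apply]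
  split_ifs <;> omega

end Truncation

namespace IsSpider

variable [Fintype V] [Fintype ι]

lemma minOrder_le_card [Nonempty ι] (hs : IsSpider G u W) (hgirth : (g : ℕ∞) ≤ G.egirth)
    (hg : 2 ≤ g) : minOrder (Fintype.card ι) g ≤ Fintype.card V := by
  classical
  let a := Classical.arbitrary ι
  rw [← one_add_sum_truncation a]
  exact hs.one_add_sum_le_card hgirth (fun i => (truncation_le a i).trans_lt (by omega))
    (truncation_add_truncation_lt (by omega) a)

variable [DecidableEq ι]

lemma exists_le_truncation (hs : IsSpider G u W) (hgirth : (g : ℕ∞) ≤ G.egirth)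
    (hg : 2 ≤ g) (hcard : Fintype.card V ≤ minOrder (Fintype.card ι) g) (a : ι) (x : V) :
    ∃ i, ∃ k ≤ truncation g a i, W i k = x := by
  have : Nonempty ι := ⟨a⟩
  rw [← one_add_sum_truncation a] at hcard
  exact hs.exists_eq_of_card_le hgirth (fun i => (truncation_le a i).trans_lt (by omega))
    (truncation_add_truncation_lt (by omega) a) hcard x

lemma isTheta_of_eq (hs : IsSpider G u W) (hgirth : (g : ℕ∞) ≤ G.egirth) (hg : 4 ≤ g)
    (hcard : Fintype.card V ≤ minOrder (Fintype.card ι) g) {a : ι}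
    (heq : ∀ b ≠ a, W b ((g + 1) / 2) = W a (g / 2)) : IsTheta G (thetaLen g a) W := by
  refine hs.isTheta (v := W a (g / 2)) hgirth hg ?_ ?_ ?_ ?_
  · intro i
    have := thetaLen_le (g := g) a i
    omega
  · intro i j _
    have hi := thetaLen_le (g := g) a i
    have hj := thetaLen_le (g := g) a j
    omega
  · intro x
    obtain ⟨i, k, hk, hx⟩ := hs.exists_le_truncation hgirth (by omega) hcard a x
    exact ⟨i, k, hk.trans (truncation_le_thetaLen a i), hx⟩
  · intro i
    rcases eq_or_ne i a with rfl | hia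
    · rw [thetaLen, Function.update_self]
    · rw [thetaLen, Function.update_of_ne hia, heq i hia]

lemma isTheta_of_even (hs : IsSpider G u W) (hgirth : (g : ℕ∞) ≤ G.egirth) (hg : 4 ≤ g)
    (heven : Even g) (hcard : Fintype.card V ≤ minOrder (Fintype.card ι) g) (a : ι) :
    IsTheta G (thetaLen g a) W := by
  refine hs.isTheta_of_eq hgirth hg hcard fun b hba => ?_
  obtain ⟨h, rfl⟩ := heven
  obtain ⟨c, -, hbc, heq⟩ := hs.exists_eq_of_tight hgirth
    (fun i => Nat.lt_of_le_of_lt (Nat.succ_le_succ (truncation_le a i)) (by omega))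
    (truncation_add_truncation_lt (by omega) a)
    (hs.exists_le_truncation hgirth (by omega) hcard a) b
  have hb : truncation (h + h) a b = (h + h - 1) / 2 := Function.update_of_ne hba ..
  obtain rfl : c = a := by
    by_contra hca
    have hc : truncation (h + h) a c = (h + h - 1) / 2 := Function.update_of_ne hca ..
    omega
  rwa [hb, show (h + h - 1) / 2 + 1 = (h + h + 1) / 2 by omega, truncation,
    Function.update_self] at heq

lemma isTheta_or_isWindmill_of_odd [Nonempty ι] (hs : IsSpider G u W)
    (hgirth : (g : ℕ∞) ≤ G.egirth) (hg : 4 ≤ g) (hodd : Odd g)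
    (hdeg : ∀ x, G.degN x = 2 ∨ G.degN x = Nat.card ι)
    (hcard : Fintype.card V ≤ minOrder (Fintype.card ι) g) :
    (∃ a, IsTheta G (thetaLen g a) W) ∨
      ∃ σ : ι → ι, Function.Involutive σ ∧ (∀ a, σ a ≠ a) ∧ IsWindmill G g σ W := by
  obtain ⟨h, rfl⟩ := hodd
  have hsurj : ∀ x, ∃ i, ∃ k ≤ h, W i k = x := by
    intro x
    obtain ⟨i, k, hk, hx⟩ :=
      hs.exists_le_truncation hgirth (by omega) hcard (Classical.arbitrary ι) x
    exact ⟨i, k, (hk.trans (truncation_le _ i)).trans (by omega), hx⟩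
  by_cases hfull : ∃ a, G.degN (W a h) = Nat.card ι
  · obtain ⟨a, ha⟩ := hfull
    refine Or.inl ⟨a, hs.isTheta_of_eq hgirth hg hcard fun b hba => ?_⟩
    rw [show (2 * h + 1 + 1) / 2 = h + 1 by omega, show (2 * h + 1) / 2 = h by omega]
    exact hs.eq_of_card_le_degN hgirth (by omega) hsurj ha.ge hba
  · have htwo : ∀ a, G.degN (W a h) = 2 := fun a =>
      (hdeg (W a h)).resolve_right (not_exists.mp hfull a)
    choose σ hfix _ hσ using hs.exists_eq_of_tight hgirth (r := fun _ => h)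
      (fun _ => by omega) (fun _ _ _ => by omega) hsurj
    have hadj : ∀ a b, G.Adj (W a h) (W b h) ↔ b = σ a := fun a =>
      hs.adj_iff_of_degN_eq_two hgirth (by omega) hσ (htwo a)
    have hinv : Function.Involutive σ := fun a =>
      ((hadj (σ a) a).mp ((hadj a (σ a)).mpr rfl).symm).symm
    exact Or.inr ⟨σ, hinv, hfix, hs.isWindmill hgirth (by omega) hsurj hσ hadj hinv⟩

end IsSpider

end Extremal

section Cages

variable {V : Type*} {G : SimpleGraph V} {m g : ℕ}

lemma nonempty_iso_Ograph_of_isTheta (hg : 4 ≤ g) {a : Fin m} {p : Fin m → ℕ → V}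
    (h : IsTheta G (thetaLen g a) p) : Nonempty (G ≃g Ograph m g) := by
  obtain ⟨n, rfl⟩ := Nat.exists_eq_add_one_of_ne_zero a.pos.ne'
  refine h.nonempty_iso (Ograph.isTheta hg) (finSuccEquiv' a) fun i => ?_
  rcases eq_or_ne i a with rfl | hia
  · rw [finSuccEquiv'_at, thetaLen, Function.update_self]
    rfl
  · obtain ⟨j, rfl⟩ := Fin.exists_succAbove_eq hia
    rw [finSuccEquiv'_succAbove, thetaLen, Function.update_of_ne hia]
    rfl

lemma even_and_nonempty_iso_Fgraph_of_isWindmill (hm : 2 ≤ m) (hg : 3 ≤ g) {σ : Fin m → Fin m}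
    (hinv : Function.Involutive σ) (hfix : ∀ a, σ a ≠ a) {p : Fin m → ℕ → V}
    (h : IsWindmill G g σ p) : Even m ∧ Nonempty (G ≃g Fgraph m g) := by
  have hcover := exists_equiv_prod_bool_of_involutive hinv hfix
  rw [Fintype.card_fin] at hcover
  obtain ⟨heven, e, he⟩ := hcover
  exact ⟨heven, h.nonempty_iso (Fgraph.isWindmill hm hg) e he⟩

namespace IsBigirthGraph

lemma le_egirth {r : ℕ} (hG : IsBigirthGraph G r m g) : (g : ℕ∞) ≤ G.egirth := by
  rw [← hG.1, girth]
  exact ENat.natCast_toNat_le_self _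

lemma exists_isSpider (hG : IsBigirthGraph G 2 m g) (hm : 2 ≤ m) :
    ∃ u, ∃ W : Fin m → ℕ → V, IsSpider G u W := by
  obtain ⟨-, hdeg, -, u, hu⟩ := hG
  have hnontrivial : ∀ v, (G.neighborSet v).Nontrivial := fun v =>
    (Set.one_lt_ncard_iff_nontrivial_and_finite.mp
      (by rcases hdeg v with h | h <;> rw [degN] at h <;> omega)).1
  have : Finite (G.neighborSet u) :=
    (Set.finite_of_ncard_ne_zero (by rw [← degN]; omega)).to_subtype
  exact ⟨u, hu ▸ exists_isSpider_fin hnontrivial u⟩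

variable [Fintype V]

lemma minOrder_le_card (hG : IsBigirthGraph G 2 m g) (hm : 2 ≤ m) (hg : 2 ≤ g) :
    minOrder m g ≤ Fintype.card V := by
  obtain ⟨u, W, hs⟩ := hG.exists_isSpider hm
  have : Nonempty (Fin m) := ⟨⟨0, by omega⟩⟩
  simpa only [Fintype.card_fin] using hs.minOrder_le_card hG.le_egirth hg

lemma nonempty_iso_of_card_le (hG : IsBigirthGraph G 2 m g) (hm : 2 ≤ m) (hg : 4 ≤ g)
    (hcard : Fintype.card V ≤ minOrder m g) :
    Nonempty (G ≃g Ograph m g) ∨ (Even m ∧ Odd g ∧ Nonempty (G ≃g Fgraph m g)) := by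
  obtain ⟨u, W, hs⟩ := hG.exists_isSpider hm
  have : Nonempty (Fin m) := ⟨⟨0, by omega⟩⟩
  have hcard' : Fintype.card V ≤ minOrder (Fintype.card (Fin m)) g := by rwa [Fintype.card_fin]
  have hdeg : ∀ x, G.degN x = 2 ∨ G.degN x = Nat.card (Fin m) := by rw [Nat.card_fin]; exact hG.2.1
  rcases Nat.even_or_odd g with heven | hodd
  · exact Or.inl (nonempty_iso_Ograph_of_isTheta hg
      (hs.isTheta_of_even hG.le_egirth hg heven hcard' (Classical.arbitrary _)))
  rcases hs.isTheta_or_isWindmill_of_odd hG.le_egirth hg hodd hdeg hcard' with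
    ⟨a, htheta⟩ | ⟨σ, hinv, hfix, hwindmill⟩
  · exact Or.inl (nonempty_iso_Ograph_of_isTheta hg htheta)
  · obtain ⟨heven, hiso⟩ :=
      even_and_nonempty_iso_Fgraph_of_isWindmill hm (by omega) hinv hfix hwindmill
    exact Or.inr ⟨heven, hodd, hiso⟩

end IsBigirthGraph

/-- The set of orders of finite `({r,m};g)`-graphs in the class `P`. -/
def bicageOrdersIn (P : ∀ V : Type, SimpleGraph V → Prop) (r m g : ℕ) : Set ℕ :=
  {n | ∃ (V : Type) (_ : Fintype V) (G : SimpleGraph V),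
    P V G ∧ IsBigirthGraph G r m g ∧ Fintype.card V = n}

lemma isLeast_bicageOrdersIn {P : ∀ V : Type, SimpleGraph V → Prop} (hm : 2 ≤ m) (hg : 4 ≤ g)
    (hP : P _ (Ograph m g)) : IsLeast (bicageOrdersIn P 2 m g) (minOrder m g) := by
  refine ⟨⟨_, inferInstance, _, hP, Ograph.isBigirthGraph hm hg, card_Ograph (by omega)⟩, ?_⟩
  rintro _ ⟨V, _, G, -, hG, rfl⟩
  exact hG.minOrder_le_card hm (by omega)

theorem planar_two_m_g_cages_general (m g : ℕ) (hm : 2 ≤ m) (hg : 4 ≤ g)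
    (P : ∀ V : Type, SimpleGraph V → Prop) (hP : P _ (Ograph m g)) :
    (Even g → IsLeast (bicageOrdersIn P 2 m g) ((m * (g - 2) + 4) / 2)) ∧
    (Odd g → IsLeast (bicageOrdersIn P 2 m g) ((m * (g - 1) + 2) / 2)) ∧
    ∀ {V : Type*} [Fintype V] (G : SimpleGraph V), IsBigirthGraph G 2 m g →
      IsLeast (bicageOrdersIn P 2 m g) (Fintype.card V) →
      Nonempty (G ≃g Ograph m g) ∨ (Even m ∧ Odd g ∧ Nonempty (G ≃g Fgraph m g)) := by
  have hleast := isLeast_bicageOrdersIn hm hg hP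
  refine ⟨fun heven => ?_, fun hodd => ?_, fun G hG hcard => ?_⟩
  · rwa [← minOrder_of_even (by omega) (by omega) heven]
  · rwa [← minOrder_of_odd (by omega) hodd]
  · exact hG.nonempty_iso_of_card_le hm hg (hcard.unique hleast).le

end Cages

/-- For `m ≥ 3` and `g ≥ 5`, `n_p({2,m};g) = (m(g−2)+4)/2` for even `g`
and `(m(g−1)+2)/2` for odd `g`; moreover the only planar `({2,m};g)`-cages up to
isomorphism are `O_{m,g}` and, when `m` is even and `g` is odd, `F_{m,g}`. -/
theorem planar_two_m_g_cages (m g : ℕ) (hm : 3 ≤ m) (hg : 5 ≤ g) :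
    (Even g → IsLeast (bicageOrders 2 m g) ((m * (g - 2) + 4) / 2)) ∧
    (Odd g → IsLeast (bicageOrders 2 m g) ((m * (g - 1) + 2) / 2)) ∧
    ∀ (V : Type) [Fintype V] (G : SimpleGraph V),
      G.IsPlanar → IsBigirthGraph G 2 m g →
      IsLeast (bicageOrders 2 m g) (Fintype.card V) →
      Nonempty (G ≃g Ograph m g) ∨
        (Even m ∧ Odd g ∧ Nonempty (G ≃g Fgraph m g)) := by
  obtain ⟨heven, hodd, huniq⟩ := planar_two_m_g_cages_general m g (by omega) (by omega)
    (fun _ G => G.IsPlanar) (Ograph.isPlanar (by omega))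
  exact ⟨heven, hodd, fun V _ G _ hG hcard => huniq G hG hcard⟩
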